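/- Suppose X'X/n → Q with Q symmetric positive definite, and let A_n be nonstochastic p_n × k matrices such that the largest eigenvalues λ_max(A_n'A_n) are bounded. Then lim_{M→∞} sup_{n≥k} sup_{β∈ℝ^k} P_{n,β,σ}(√n‖A_nβ̃ − A_nβ‖ ≥ M) = 0, and for every ε > 0 and any sequence c_n ≥ 0 with c_n = o(n^{1/2}), lim_{n→∞} sup_{β∈ℝ^k} P_{n,β,σ}(c_n‖A_nβ̃ − A_nβ‖ ≥ ε) = 0. -/

import Mathlib

open MeasureTheory Matrix Real Filter Topology ENNReal NNReal

noncomputable section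

/-- Euclidean norm of a finite tuple. -/
def enorm2 {ι : Type*} [Fintype ι] (v : ι → ℝ) : ℝ := Real.sqrt (∑ i, v i ^ 2)

/-- The `N(0, σ² I)` distribution on `ι → ℝ`, given by its Lebesgue density. -/
def gaussPi (ι : Type*) [Fintype ι] (σ2 : ℝ) : Measure (ι → ℝ) :=
  volume.withDensity fun x => ENNReal.ofReal
    ((2 * π * σ2) ^ (-(Fintype.card ι : ℝ) / 2) * Real.exp (-(enorm2 x) ^ 2 / (2 * σ2)))

/-- The Lebesgue density of the `N(0, σ² Q⁻¹)` distribution on `ι → ℝ`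
(for `Q` symmetric positive definite). -/
def gaussCovDens {ι : Type*} [Fintype ι] [DecidableEq ι] (σ2 : ℝ) (Q : Matrix ι ι ℝ)
    (x : ι → ℝ) : ℝ :=
  (2 * π * σ2) ^ (-(Fintype.card ι : ℝ) / 2) * Real.sqrt Q.det *
    Real.exp (-(x ⬝ᵥ Q.mulVec x) / (2 * σ2))

/-- The `N(0, σ² Q⁻¹)` distribution on `ι → ℝ` (for `Q` symmetric positive definite),
given by its Lebesgue density. -/
def gaussCov {ι : Type*} [Fintype ι] [DecidableEq ι] (σ2 : ℝ) (Q : Matrix ι ι ℝ) :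
    Measure (ι → ℝ) :=
  volume.withDensity fun x => ENNReal.ofReal (gaussCovDens σ2 Q x)

open Classical in
/-- Symmetric positive semidefinite square root (junk value `0` off the psd cone). -/
def msqrt {ι : Type*} [Fintype ι] [DecidableEq ι] (A : Matrix ι ι ℝ) : Matrix ι ι ℝ :=
  if h : A.PosSemidef then
    (h.1.eigenvectorUnitary : Matrix ι ι ℝ) * diagonal (Real.sqrt ∘ h.1.eigenvalues) *
      (star h.1.eigenvectorUnitary : Matrix ι ι ℝ)
  else 0

open Classical in
/-- Smallest eigenvalue of a symmetric matrix (junk value `0` otherwise). -/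
def lamMin {ι : Type*} [Fintype ι] [DecidableEq ι] (A : Matrix ι ι ℝ) : ℝ :=
  if h : A.IsHermitian then ⨅ i, h.eigenvalues i else 0

open Classical in
/-- Largest eigenvalue of a symmetric matrix (junk value `0` otherwise). -/
def lamMax {ι : Type*} [Fintype ι] [DecidableEq ι] (A : Matrix ι ι ℝ) : ℝ :=
  if h : A.IsHermitian then ⨆ i, h.eigenvalues i else 0

variable {n k₁ k₂ : ℕ}

/-- First block of columns of the design matrix. -/
def X1 (X : Matrix (Fin n) (Fin k₁ ⊕ Fin k₂) ℝ) : Matrix (Fin n) (Fin k₁) ℝ :=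
  X.submatrix id Sum.inl

/-- Second block of columns of the design matrix. -/
def X2 (X : Matrix (Fin n) (Fin k₁ ⊕ Fin k₂) ℝ) : Matrix (Fin n) (Fin k₂) ℝ :=
  X.submatrix id Sum.inr

/-- Unrestricted least squares estimator. -/
def betaU (X : Matrix (Fin n) (Fin k₁ ⊕ Fin k₂) ℝ) (Y : Fin n → ℝ) : (Fin k₁ ⊕ Fin k₂) → ℝ :=
  (Xᵀ * X)⁻¹.mulVec (Xᵀ.mulVec Y)

/-- Restricted least squares estimator. -/
def betaR (X : Matrix (Fin n) (Fin k₁ ⊕ Fin k₂) ℝ) (Y : Fin n → ℝ) : (Fin k₁ ⊕ Fin k₂) → ℝ :=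
  Sum.elim (((X1 X)ᵀ * X1 X)⁻¹.mulVec ((X1 X)ᵀ.mulVec Y)) (fun _ => 0)

/-- Risk estimate of the restricted model. -/
def rR (X : Matrix (Fin n) (Fin k₁ ⊕ Fin k₂) ℝ) (σ2 : ℝ) (Y : Fin n → ℝ) : ℝ :=
  Y ⬝ᵥ Y - betaR X Y ⬝ᵥ (Xᵀ * X).mulVec (betaR X Y) + σ2 * (2 * k₁ - n)

/-- Risk estimate of the unrestricted model. -/
def rU (X : Matrix (Fin n) (Fin k₁ ⊕ Fin k₂) ℝ) (σ2 : ℝ) (Y : Fin n → ℝ) : ℝ :=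
  Y ⬝ᵥ Y - betaU X Y ⬝ᵥ (Xᵀ * X).mulVec (betaU X Y) + σ2 * (2 * (k₁ + k₂) - n)

/-- The model averaging weight `λ̂`. -/
def lamHat (α σ2 : ℝ) (X : Matrix (Fin n) (Fin k₁ ⊕ Fin k₂) ℝ) (Y : Fin n → ℝ) : ℝ :=
  Real.exp (-(α * rR X σ2 Y) / σ2) /
    (Real.exp (-(α * rR X σ2 Y) / σ2) + Real.exp (-(α * rU X σ2 Y) / σ2))

/-- Leung and Barron's model averaging estimator `β̃`. -/
def mavg (α σ2 : ℝ) (X : Matrix (Fin n) (Fin k₁ ⊕ Fin k₂) ℝ) (Y : Fin n → ℝ) :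
    (Fin k₁ ⊕ Fin k₂) → ℝ :=
  lamHat α σ2 X Y • betaR X Y + (1 - lamHat α σ2 X Y) • betaU X Y

/-- Projection on the column space of `X₁`. -/
def projR (X : Matrix (Fin n) (Fin k₁ ⊕ Fin k₂) ℝ) : Matrix (Fin n) (Fin n) ℝ :=
  X1 X * ((X1 X)ᵀ * X1 X)⁻¹ * (X1 X)ᵀ

/-- Projection on the column space of `X`. -/
def projU (X : Matrix (Fin n) (Fin k₁ ⊕ Fin k₂) ℝ) : Matrix (Fin n) (Fin n) ℝ :=
  X * (Xᵀ * X)⁻¹ * Xᵀ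

/-- The distribution `P_{n,β,σ}` of `Y = Xβ + u`, `u ~ N(0, σ² Iₙ)`. -/
def Pmeas (X : Matrix (Fin n) (Fin k₁ ⊕ Fin k₂) ℝ) (β : (Fin k₁ ⊕ Fin k₂) → ℝ) (σ2 : ℝ) :
    Measure (Fin n → ℝ) :=
  (gaussPi (Fin n) σ2).map (fun u => X.mulVec β + u)

/-- The function `h_{a,b}(ξ) = ξ / (1 + a exp(−ξ²/b))`. -/
def hfun (a b ξ : ℝ) : ℝ := ξ / (1 + a * Real.exp (-ξ ^ 2 / b))

/-- The inverse `g_{a,b}` of `h_{a,b}`. -/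
def gfun (a b : ℝ) : ℝ → ℝ := Function.invFun (hfun a b)

open Classical in
/-- `g(‖w‖) w / ‖w‖`, with the convention that this is `0` for `w = 0`. -/
def gdir (a b : ℝ) {ι : Type*} [Fintype ι] (w : ι → ℝ) : ι → ℝ :=
  if w = 0 then 0 else (gfun a b (enorm2 w) / enorm2 w) • w


/-- The finite-sample density `f_{n,β,σ}` of `√n(β̃ − β)` (Theorem 3 of the paper). -/
def fdens {n k₁ k₂ : ℕ} (X : Matrix (Fin n) (Fin k₁ ⊕ Fin k₂) ℝ)
    (β : (Fin k₁ ⊕ Fin k₂) → ℝ) (σ2 α : ℝ) (t : (Fin k₁ ⊕ Fin k₂) → ℝ) : ℝ :=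
  let a := Real.exp (2 * α * k₂)
  let b := σ2 / α
  let S := (X2 X)ᵀ * (1 - projR X) * X2 X
  let w := (Real.sqrt n)⁻¹ • (msqrt S).mulVec ((t ∘ Sum.inr) + Real.sqrt n • (β ∘ Sum.inr))
  (2 * π * σ2) ^ (-((k₁ : ℝ) + k₂) / 2) * Real.sqrt (((n : ℝ)⁻¹ • (Xᵀ * X)).det) *
    Real.exp (-(enorm2 ((Real.sqrt n)⁻¹ •
        ((msqrt ((X1 X)ᵀ * X1 X)).mulVec (t ∘ Sum.inl) +
          ((msqrt ((X1 X)ᵀ * X1 X))⁻¹ * (X1 X)ᵀ * X2 X).mulVec (t ∘ Sum.inr)))) ^ 2 /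
      (2 * σ2)) *
    (1 + Real.exp (-(α / σ2) * gfun a b (enorm2 w) ^ 2 + 2 * α * k₂)) ^ (k₂ : ℕ) *
    (1 + (2 * α / σ2) * gfun a b (enorm2 w) ^ 2 *
        (1 + Real.exp ((α / σ2) * gfun a b (enorm2 w) ^ 2 - 2 * α * k₂))⁻¹)⁻¹ *
    Real.exp (-(enorm2 (gdir a b w - (msqrt S).mulVec (β ∘ Sum.inr))) ^ 2 / (2 * σ2))

/-- The density `f_{∞,γ}` of the limiting distribution (formula (13) of the paper),
stated for a general symmetric positive definite matrix in place of `Q`. -/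
def fInfty {k₁ k₂ : ℕ} (Q : Matrix (Fin k₁ ⊕ Fin k₂) (Fin k₁ ⊕ Fin k₂) ℝ) (σ2 α : ℝ)
    (γ : Fin k₂ → ℝ) (t : (Fin k₁ ⊕ Fin k₂) → ℝ) : ℝ :=
  let a := Real.exp (2 * α * k₂)
  let b := σ2 / α
  let S := Q.toBlocks₂₂ - Q.toBlocks₂₁ * Q.toBlocks₁₁⁻¹ * Q.toBlocks₁₂
  let w := (msqrt S).mulVec ((t ∘ Sum.inr) + γ)
  (2 * π * σ2) ^ (-((k₁ : ℝ) + k₂) / 2) * Real.sqrt Q.det *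
    Real.exp (-(enorm2 ((msqrt Q.toBlocks₁₁).mulVec (t ∘ Sum.inl) +
        ((msqrt Q.toBlocks₁₁)⁻¹ * Q.toBlocks₁₂).mulVec (t ∘ Sum.inr))) ^ 2 / (2 * σ2)) *
    (1 + Real.exp (-(α / σ2) * gfun a b (enorm2 w) ^ 2 + 2 * α * k₂)) ^ (k₂ : ℕ) *
    (1 + (2 * α / σ2) * gfun a b (enorm2 w) ^ 2 *
        (1 + Real.exp ((α / σ2) * gfun a b (enorm2 w) ^ 2 - 2 * α * k₂))⁻¹)⁻¹ *
    Real.exp (-(enorm2 (gdir a b w - (msqrt S).mulVec γ)) ^ 2 / (2 * σ2))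


open ProbabilityTheory in
lemma gaussPi_eq_pi (m : ℕ) (s : ℝ) (hs : 0 < s) :
    gaussPi (Fin m) s = Measure.pi (fun _ : Fin m => gaussianReal 0 s.toNNReal) := by
  have hv : s.toNNReal ≠ 0 := by simpa using hs
  have hcoe : (s.toNNReal : ℝ) = s := Real.coe_toNNReal s hs.le
  have hdens : ∀ x : Fin m → ℝ,
      (2 * π * s) ^ (-(Fintype.card (Fin m) : ℝ) / 2) * Real.exp (-(enorm2 x) ^ 2 / (2 * s))
        = ∏ i, gaussianPDFReal 0 s.toNNReal (x i) := by
    intro x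
    have hpos : 0 < 2 * π * s := by positivity
    simp only [gaussianPDFReal, hcoe, sub_zero]
    rw [Finset.prod_mul_distrib, Finset.prod_const, ← Real.exp_sum, enorm2,
      Real.sq_sqrt (Finset.sum_nonneg fun i _ => sq_nonneg _)]
    congr 1
    · rw [Real.sqrt_eq_rpow, ← Real.rpow_neg hpos.le, ← Real.rpow_natCast, ← Real.rpow_mul hpos.le]
      congr 1
      simp
      ring
    · congr 1
      rw [← Finset.sum_div, Finset.sum_neg_distrib]
  symm
  apply Measure.pi_eq
  intro t ht
  unfold gaussPi
  rw [withDensity_apply _ (MeasurableSet.univ_pi ht)]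
  simp_rw [hdens]
  rw [volume_pi, Measure.restrict_pi_pi, ← ofReal_integral_eq_lintegral_ofReal,
    integral_fintype_prod_eq_prod, ENNReal.ofReal_prod_of_nonneg]
  · refine Finset.prod_congr rfl fun i _ => ?_
    rw [gaussianReal_apply_eq_integral _ hv]
  · intro i _
    exact integral_nonneg fun x => gaussianPDFReal_nonneg _ _ _
  · exact Integrable.fintype_prod fun i => (integrable_gaussianPDFReal _ _).restrict
  · exact Eventually.of_forall fun x => Finset.prod_nonneg fun i _ => gaussianPDFReal_nonneg _ _ _

open ProbabilityTheory in
lemma gauss_moment (m : ℕ) (v : ℝ≥0) (i j : Fin m) :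
    Integrable (fun u : Fin m → ℝ => u i * u j) (Measure.pi (fun _ => gaussianReal 0 v)) ∧
    ∫ u : Fin m → ℝ, u i * u j ∂(Measure.pi (fun _ => gaussianReal 0 v))
      = if i = j then (v : ℝ) else 0 := by
  have hL : ∀ i : Fin m, MemLp (fun u : Fin m → ℝ => u i) 2
      (Measure.pi (fun _ => gaussianReal 0 v)) := fun i =>
    (memLp_id_gaussianReal' 2 (by simp)).comp_measurePreserving
      (measurePreserving_eval (fun _ : Fin m => gaussianReal 0 v) i)
  have h0 : ∀ i : Fin m, ∫ u : Fin m → ℝ, u i ∂(Measure.pi (fun _ => gaussianReal 0 v)) = 0 := by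
    intro i
    rw [integral_eval (μ := fun _ : Fin m => gaussianReal 0 v), integral_id_gaussianReal]
  refine ⟨(hL i).integrable_mul (hL j), ?_⟩
  split_ifs with h
  · subst h
    have := integral_comp_eval (μ := fun _ : Fin m => gaussianReal 0 v) (i := i)
      (f := fun x : ℝ => x * x) (by fun_prop)
    rw [this]
    have h2 := variance_of_integral_eq_zero (X := id) (μ := gaussianReal 0 v) (by fun_prop)
      (by simp)
    rw [variance_id_gaussianReal] at h2
    rw [h2]
    simp [pow_two]
  · have hi := (iIndepFun_pi (μ := fun _ : Fin m => gaussianReal 0 v) (X := fun _ => id)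
      (fun _ => aemeasurable_id)).indepFun h
    have hc := hi.covariance_eq_zero (hL i) (hL j)
    have hs := covariance_eq_sub (hL i) (hL j)
    rw [h0 i, zero_mul, sub_zero] at hs
    exact hs.symm.trans hc

lemma gauss_quad (m : ℕ) (s : ℝ) (hs : 0 < s) (P : Matrix (Fin m) (Fin m) ℝ) (a b : ℝ)
    (ha : 0 ≤ a) (hb : 0 ≤ b) (hP : ∀ u, 0 ≤ u ⬝ᵥ P.mulVec u) :
    ∫⁻ u, ENNReal.ofReal (a * (u ⬝ᵥ P.mulVec u) + b) ∂(gaussPi (Fin m) s)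
      = ENNReal.ofReal (a * (s * P.trace) + b) := by
  rw [gaussPi_eq_pi m s hs]
  set μ := Measure.pi (fun _ : Fin m => ProbabilityTheory.gaussianReal 0 s.toNNReal) with hμ
  have hq : ∀ u : Fin m → ℝ, u ⬝ᵥ P.mulVec u = ∑ i, ∑ j, P i j * (u i * u j) := by
    intro u
    simp only [dotProduct, mulVec, Finset.mul_sum]
    exact Finset.sum_congr rfl fun i _ => Finset.sum_congr rfl fun j _ => by ring
  have hint : Integrable (fun u : Fin m → ℝ => u ⬝ᵥ P.mulVec u) μ := by
    simp_rw [hq]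
    exact integrable_finsetSum _ fun i _ => integrable_finsetSum _ fun j _ =>
      (gauss_moment m _ i j).1.const_mul _
  have hval : ∫ u, u ⬝ᵥ P.mulVec u ∂μ = s * P.trace := by
    simp_rw [hq]
    have hI : ∀ i j, Integrable (fun u : Fin m → ℝ => P i j * (u i * u j)) μ := fun i j =>
      (gauss_moment m _ i j).1.const_mul _
    have hE : ∀ i j, ∫ u : Fin m → ℝ, P i j * (u i * u j) ∂μ = P i j * if i = j then s else 0 := by
      intro i j
      rw [integral_const_mul, hμ, (gauss_moment m _ i j).2, Real.coe_toNNReal s hs.le]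
    rw [integral_finsetSum _ fun i _ => integrable_finsetSum _ fun j _ => hI i j]
    simp_rw [integral_finsetSum _ fun j _ => hI _ j, hE]
    simp [trace, Finset.mul_sum, mul_comm]
  have hint2 : Integrable (fun u : Fin m → ℝ => a * (u ⬝ᵥ P.mulVec u) + b) μ :=
    (hint.const_mul a).add (integrable_const b)
  rw [← ofReal_integral_eq_lintegral_ofReal hint2,
    integral_add (hint.const_mul a) (integrable_const b), integral_const_mul, hval]
  · simp
  · exact Eventually.of_forall fun u => add_nonneg (mul_nonneg ha (hP u)) hb

lemma enorm2_sq {ι : Type*} [Fintype ι] (v : ι → ℝ) : enorm2 v ^ 2 = v ⬝ᵥ v := by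
  rw [enorm2, Real.sq_sqrt (Finset.sum_nonneg fun i _ => sq_nonneg _)]
  simp [dotProduct, pow_two]

lemma dot_self_nonneg {ι : Type*} [Fintype ι] (v : ι → ℝ) : 0 ≤ v ⬝ᵥ v :=
  (enorm2_sq v) ▸ sq_nonneg _

lemma dot_mulVec_le {ι κ : Type*} [Fintype ι] [Fintype κ] (B : Matrix ι κ ℝ) (w : κ → ℝ) :
    B.mulVec w ⬝ᵥ B.mulVec w ≤ (Bᵀ * B).trace * (w ⬝ᵥ w) := by
  have h1 : (Bᵀ * B).trace = ∑ i, ∑ j, B i j ^ 2 := by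
    rw [Finset.sum_comm]
    simp [trace, mul_apply, pow_two]
  rw [h1, Finset.sum_mul]
  simp only [dotProduct, mulVec]
  refine Finset.sum_le_sum fun i _ => ?_
  have := Finset.sum_mul_sq_le_sq_mul_sq Finset.univ (B i) w
  simpa [pow_two] using this

lemma trace_le_lamMax {ι κ : Type*} [Fintype ι] [Fintype κ] [DecidableEq κ]
    (B : Matrix ι κ ℝ) (c : ℝ) (h : lamMax (Bᵀ * B) ≤ c) :
    (Bᵀ * B).trace ≤ Fintype.card κ * c := by
  have hH : (Bᵀ * B).IsHermitian := by
    simpa using isHermitian_conjTranspose_mul_self B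
  rw [lamMax, dif_pos hH] at h
  rw [hH.trace_eq_sum_eigenvalues]
  calc _ ≤ ∑ i : κ, c := Finset.sum_le_sum fun i _ =>
        (le_ciSup (Set.finite_range hH.eigenvalues).bddAbove i).trans h
    _ = _ := by simp

section alg
variable {n k₁ k₂ : ℕ} (X : Matrix (Fin n) (Fin k₁ ⊕ Fin k₂) ℝ)

lemma gram_posDef (h : X.rank = k₁ + k₂) : (Xᵀ * X).PosDef := by
  have hi : Function.Injective X.mulVec := by
    have h2 := LinearMap.finrank_range_add_finrank_ker X.mulVecLin
    have h3 : Module.finrank ℝ (LinearMap.range X.mulVecLin) = k₁ + k₂ := h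
    rw [h3] at h2
    simp only [Module.finrank_fintype_fun_eq_card, Fintype.card_sum, Fintype.card_fin] at h2
    have h4 : Module.finrank ℝ (LinearMap.ker X.mulVecLin) = 0 := by omega
    exact LinearMap.ker_eq_bot.1 (Submodule.finrank_eq_zero.1 h4)
  simpa using Matrix.PosDef.conjTranspose_mul_self X hi

lemma normalU (h : (Xᵀ * X).PosDef) (Y : Fin n → ℝ) :
    Xᵀ *ᵥ (X *ᵥ betaU X Y) = Xᵀ *ᵥ Y := by
  have hd : IsUnit (Xᵀ * X).det := h.det_pos.ne'.isUnit
  rw [betaU, mulVec_mulVec, mulVec_mulVec, mul_nonsing_inv _ hd, one_mulVec]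

lemma X_betaR (Y : Fin n → ℝ) : X *ᵥ betaR X Y =
    X1 X *ᵥ (((X1 X)ᵀ * X1 X)⁻¹ *ᵥ ((X1 X)ᵀ *ᵥ Y)) := by
  unfold betaR
  generalize ((X1 X)ᵀ * X1 X)⁻¹ *ᵥ ((X1 X)ᵀ *ᵥ Y) = b
  ext i
  simp [mulVec, dotProduct, X1]

lemma normalR (h : (Xᵀ * X).PosDef) (Y : Fin n → ℝ) :
    (X1 X)ᵀ *ᵥ (X *ᵥ betaR X Y) = (X1 X)ᵀ *ᵥ Y := by
  have h1 : ((X1 X)ᵀ * X1 X).PosDef := by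
    have : (X1 X)ᵀ * X1 X = (Xᵀ * X).submatrix Sum.inl Sum.inl := by
      ext i j; simp [X1, mul_apply]
    rw [this]
    exact h.submatrix Sum.inl_injective
  have hd : IsUnit ((X1 X)ᵀ * X1 X).det := h1.det_pos.ne'.isUnit
  rw [X_betaR, mulVec_mulVec, mulVec_mulVec, mul_nonsing_inv _ hd, one_mulVec]

lemma dotT {ι κ : Type*} [Fintype ι] [Fintype κ] (B : Matrix ι κ ℝ) (w : ι → ℝ) (z : κ → ℝ) :
    w ⬝ᵥ B *ᵥ z = Bᵀ *ᵥ w ⬝ᵥ z := by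
  rw [dotProduct_mulVec, mulVec_transpose]

lemma r_diff (h : (Xᵀ * X).PosDef) (s : ℝ) (Y : Fin n → ℝ) :
    rR X s Y - rU X s Y = X *ᵥ (betaU X Y - betaR X Y) ⬝ᵥ X *ᵥ (betaU X Y - betaR X Y)
      - 2 * s * k₂ := by
  have e1 : ∀ b c : Fin k₁ ⊕ Fin k₂ → ℝ, b ⬝ᵥ (Xᵀ * X) *ᵥ c = X *ᵥ b ⬝ᵥ X *ᵥ c := by
    intro b c
    rw [← mulVec_mulVec, dotT, transpose_transpose]
  have e2 : X *ᵥ betaU X Y ⬝ᵥ X *ᵥ betaR X Y = Y ⬝ᵥ X *ᵥ betaR X Y := by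
    rw [dotT, normalU X h, ← dotT]
  have e3 : X *ᵥ betaR X Y ⬝ᵥ X *ᵥ betaR X Y = Y ⬝ᵥ X *ᵥ betaR X Y := by
    conv_lhs => rw [X_betaR X, dotT, ← X_betaR X, normalR X h, ← dotT, ← X_betaR X]
  have e4 := dotProduct_comm (X *ᵥ betaU X Y) (X *ᵥ betaR X Y)
  simp only [rR, rU, e1, mulVec_sub, sub_dotProduct, dotProduct_sub]
  linarith

lemma lam_bound (h : (Xᵀ * X).PosDef) (α s : ℝ) (hα : 0 < α) (hs : 0 < s) (Y : Fin n → ℝ) :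
    lamHat α s X Y ^ 2 *
      (X *ᵥ (betaU X Y - betaR X Y) ⬝ᵥ X *ᵥ (betaU X Y - betaR X Y))
      ≤ Real.exp (2 * α * k₂) * (s / α) := by
  have hd := r_diff X h s Y
  set q := X *ᵥ (betaU X Y - betaR X Y) ⬝ᵥ X *ᵥ (betaU X Y - betaR X Y) with hq
  have hq0 : 0 ≤ q := dot_self_nonneg _
  set l := lamHat α s X Y with hl
  have hl0 : 0 ≤ l := by rw [hl, lamHat]; positivity
  have hl1 : l ≤ 1 := by
    rw [hl, lamHat]
    exact div_le_one_of_le₀ (by linarith [Real.exp_pos (-(α * rU X s Y) / s)]) (by positivity)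
  have hl2 : l ≤ Real.exp (2 * α * k₂) * Real.exp (-(α * q / s)) := by
    have : Real.exp (2 * α * k₂) * Real.exp (-(α * q / s)) =
        Real.exp (-(α * rR X s Y) / s) / Real.exp (-(α * rU X s Y) / s) := by
      rw [← Real.exp_add, ← Real.exp_sub]
      congr 1
      have : q = rR X s Y - rU X s Y + 2 * s * k₂ := by linarith
      rw [this]; field_simp; ring
    rw [this, hl, lamHat]
    gcongr
    linarith [Real.exp_pos (-(α * rR X s Y) / s)]
  have hx : α * q / s * Real.exp (-(α * q / s)) ≤ 1 := by
    rw [Real.exp_neg, mul_inv_le_iff₀ (Real.exp_pos _), one_mul]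
    linarith [Real.add_one_le_exp (α * q / s)]
  calc l ^ 2 * q ≤ l * q := by
        apply mul_le_mul_of_nonneg_right _ hq0
        nlinarith
    _ ≤ Real.exp (2 * α * k₂) * Real.exp (-(α * q / s)) * q := by gcongr
    _ = Real.exp (2 * α * k₂) * (s / α) * (α * q / s * Real.exp (-(α * q / s))) := by
        field_simp
    _ ≤ Real.exp (2 * α * k₂) * (s / α) * 1 := by gcongr
    _ = _ := mul_one _

lemma projU_dot (h : (Xᵀ * X).PosDef) (u : Fin n → ℝ) :
    u ⬝ᵥ projU X *ᵥ u = X *ᵥ betaU X u ⬝ᵥ X *ᵥ betaU X u := by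
  have : projU X *ᵥ u = X *ᵥ betaU X u := by
    simp [projU, betaU, mulVec_mulVec, Matrix.mul_assoc]
  rw [this, dotT X (X *ᵥ betaU X u), normalU X h, ← dotT]

lemma projU_trace (h : (Xᵀ * X).PosDef) : (projU X).trace = k₁ + k₂ := by
  have hd : IsUnit (Xᵀ * X).det := h.det_pos.ne'.isUnit
  rw [projU, Matrix.mul_assoc, trace_mul_comm, Matrix.mul_assoc, nonsing_inv_mul _ hd]
  simp

/-- The deterministic bound. -/
lemma det_bound (h : (Xᵀ * X).PosDef) (α s : ℝ) (hα : 0 < α) (hs : 0 < s)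
    (β : Fin k₁ ⊕ Fin k₂ → ℝ) (u : Fin n → ℝ) :
    (mavg α s X (X *ᵥ β + u) - β) ⬝ᵥ (mavg α s X (X *ᵥ β + u) - β) ≤
      ((Xᵀ * X)⁻¹).trace * (2 * (u ⬝ᵥ projU X *ᵥ u) + 2 * (Real.exp (2 * α * k₂) * (s / α))) := by
  have hd : IsUnit (Xᵀ * X).det := h.det_pos.ne'.isUnit
  set Y := X *ᵥ β + u with hY
  set l := lamHat α s X Y with hl
  set d := betaU X Y - betaR X Y with hdd
  have hU : betaU X Y = β + betaU X u := by
    rw [hY, betaU, mulVec_add, mulVec_add, mulVec_mulVec, mulVec_mulVec, Matrix.mul_assoc,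
      nonsing_inv_mul _ hd, one_mulVec, betaU]
  have hv : mavg α s X Y - β = betaU X u - l • d := by
    rw [mavg, hdd, ← hl]
    have : betaU X u = betaU X Y - β := by rw [hU]; simp
    rw [this]
    module
  have hlb := lam_bound X h α s hα hs Y
  rw [← hdd, ← hl] at hlb
  rw [hv]
  set v := betaU X u - l • d with hvd
  have hB : v = ((Xᵀ * X)⁻¹ * Xᵀ) *ᵥ (X *ᵥ v) := by
    rw [mulVec_mulVec, Matrix.mul_assoc, nonsing_inv_mul _ hd, one_mulVec]
  have htr : ((((Xᵀ * X)⁻¹ * Xᵀ))ᵀ * ((Xᵀ * X)⁻¹ * Xᵀ)).trace = ((Xᵀ * X)⁻¹).trace := by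
    rw [trace_mul_comm, transpose_mul, transpose_transpose, transpose_nonsing_inv, transpose_mul,
      transpose_transpose, Matrix.mul_assoc, ← Matrix.mul_assoc Xᵀ, mul_nonsing_inv _ hd,
      Matrix.mul_one]
  have h1 := dot_mulVec_le ((Xᵀ * X)⁻¹ * Xᵀ) (X *ᵥ v)
  rw [← hB, htr] at h1
  refine h1.trans (mul_le_mul_of_nonneg_left ?_ h.inv.posSemidef.trace_nonneg)
  rw [projU_dot X h]
  have h2 := dot_self_nonneg (X *ᵥ betaU X u + l • X *ᵥ d)
  rw [hvd, mulVec_sub, mulVec_smul]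
  simp only [sub_dotProduct, dotProduct_sub, add_dotProduct, dotProduct_add, smul_dotProduct,
    dotProduct_smul, smul_eq_mul] at h2 ⊢
  nlinarith
end alg

lemma prob_bound {n k₁ k₂ q : ℕ} (X : Matrix (Fin n) (Fin k₁ ⊕ Fin k₂) ℝ)
    (h : (Xᵀ * X).PosDef) (α s : ℝ) (hα : 0 < α) (hs : 0 < s)
    (A : Matrix (Fin q) (Fin k₁ ⊕ Fin k₂) ℝ) (K T : ℝ) (hK0 : 0 ≤ K) (hT0 : 0 ≤ T)
    (hK : (Aᵀ * A).trace ≤ K)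
    (hT : n * ((Xᵀ * X)⁻¹).trace ≤ T) (β : Fin k₁ ⊕ Fin k₂ → ℝ) (r t : ℝ) (ht : 0 < t) :
    Pmeas X β s {Y | t ≤ r * (Real.sqrt n * enorm2 (A *ᵥ mavg α s X Y - A *ᵥ β))} ≤
      ENNReal.ofReal (r ^ 2 * (K * T *
        (2 * (s * (k₁ + k₂)) + 2 * (Real.exp (2 * α * k₂) * (s / α)))) / t ^ 2) := by
  set C := Real.exp (2 * α * k₂) * (s / α) with hC
  have hC0 : 0 ≤ C := by positivity
  have hP0 : ∀ u, 0 ≤ u ⬝ᵥ projU X *ᵥ u := fun u => by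
    rw [projU_dot X h]; exact dot_self_nonneg _
  set a := r ^ 2 * K * T * 2 with ha
  have ha0 : 0 ≤ a := by positivity
  have key : ∀ u : Fin n → ℝ,
      (r * (Real.sqrt n * enorm2 (A *ᵥ mavg α s X (X *ᵥ β + u) - A *ᵥ β))) ^ 2 ≤
        a * (u ⬝ᵥ projU X *ᵥ u) + a * C := by
    intro u
    have h1 := det_bound X h α s hα hs β u
    rw [← hC] at h1
    set v := mavg α s X (X *ᵥ β + u) - β with hv
    have h2 := dot_mulVec_le A v
    have hvv := dot_self_nonneg v
    rw [← mulVec_sub, ← hv, mul_pow, mul_pow, Real.sq_sqrt (Nat.cast_nonneg n), enorm2_sq]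
    have hW : 0 ≤ 2 * (u ⬝ᵥ projU X *ᵥ u) + 2 * C := by linarith [hP0 u]
    calc r ^ 2 * (n * (A *ᵥ v ⬝ᵥ A *ᵥ v)) ≤ r ^ 2 * (n * (K * (v ⬝ᵥ v))) := by
          gcongr; exact h2.trans (mul_le_mul_of_nonneg_right hK hvv)
      _ ≤ r ^ 2 * (n * (K * (((Xᵀ * X)⁻¹).trace * (2 * (u ⬝ᵥ projU X *ᵥ u) + 2 * C)))) := by
          gcongr
      _ = r ^ 2 * (K * ((n * ((Xᵀ * X)⁻¹).trace) * (2 * (u ⬝ᵥ projU X *ᵥ u) + 2 * C))) := by ring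
      _ ≤ r ^ 2 * (K * (T * (2 * (u ⬝ᵥ projU X *ᵥ u) + 2 * C))) := by gcongr
      _ = _ := by rw [ha]; ring
  have hcont : Continuous (fun u : Fin n → ℝ => a * (u ⬝ᵥ projU X *ᵥ u) + a * C) := by
    fun_prop
  have hcont2 : Continuous (fun Y : Fin n → ℝ => Y - X *ᵥ β) := by fun_prop
  have hmeas : MeasurableSet
      {Y : Fin n → ℝ | t ^ 2 ≤ a * ((Y - X *ᵥ β) ⬝ᵥ projU X *ᵥ (Y - X *ᵥ β)) + a * C} :=
    (isClosed_le continuous_const (hcont.comp hcont2)).measurableSet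
  have hsub : {Y | t ≤ r * (Real.sqrt n * enorm2 (A *ᵥ mavg α s X Y - A *ᵥ β))} ⊆
      {Y : Fin n → ℝ | t ^ 2 ≤ a * ((Y - X *ᵥ β) ⬝ᵥ projU X *ᵥ (Y - X *ᵥ β)) + a * C} := by
    intro Y hY
    have := key (Y - X *ᵥ β)
    rw [add_sub_cancel] at this
    exact (pow_le_pow_left₀ ht.le hY 2).trans this
  refine (measure_mono hsub).trans ?_
  rw [Pmeas, Measure.map_apply (by fun_prop) hmeas]
  simp only [Set.preimage_setOf_eq, add_sub_cancel_left]
  have hset : {u : Fin n → ℝ | t ^ 2 ≤ a * (u ⬝ᵥ projU X *ᵥ u) + a * C} ⊆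
      {u | ENNReal.ofReal (t ^ 2) ≤ ENNReal.ofReal (a * (u ⬝ᵥ projU X *ᵥ u) + a * C)} :=
    fun u hu => ENNReal.ofReal_le_ofReal hu
  refine (measure_mono hset).trans ?_
  refine (meas_ge_le_lintegral_div hcont.measurable.ennreal_ofReal.aemeasurable
    (by simpa using ht.ne') ENNReal.ofReal_ne_top).trans ?_
  rw [gauss_quad n s hs (projU X) a (a * C) ha0 (by positivity) hP0, projU_trace X h,
    ← ENNReal.ofReal_div_of_pos (by positivity)]
  apply le_of_eq
  congr 2
  rw [ha]; ring

/-- uniform `√n`-consistency of `A_nβ̃` for `A_nβ` when the largest eigenvalues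
of `A_n'A_n` are bounded, and the resulting uniform `c_n`-consistency for `c_n = o(√n)`. -/
theorem statement5 {k₁ k₂ : ℕ} (hk₁ : 0 < k₁) (hk₂ : 0 < k₂)
    (X : ∀ n : ℕ, Matrix (Fin n) (Fin k₁ ⊕ Fin k₂) ℝ)
    (hX : ∀ n, k₁ + k₂ ≤ n → (X n).rank = k₁ + k₂)
    (Q : Matrix (Fin k₁ ⊕ Fin k₂) (Fin k₁ ⊕ Fin k₂) ℝ) (hQ : Q.PosDef)
    (hlim : Tendsto (fun n : ℕ => (n : ℝ)⁻¹ • ((X n)ᵀ * X n)) atTop (𝓝 Q))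
    (σ α : ℝ) (hσ : 0 < σ) (hα : 0 < α)
    (p : ℕ → ℕ) (A : ∀ n : ℕ, Matrix (Fin (p n)) (Fin k₁ ⊕ Fin k₂) ℝ)
    (hA : ∃ c : ℝ, ∀ n, lamMax ((A n)ᵀ * A n) ≤ c) :
    Tendsto (fun M : ℝ => ⨆ n, ⨆ (_ : k₁ + k₂ ≤ n), ⨆ β : (Fin k₁ ⊕ Fin k₂) → ℝ,
        Pmeas (X n) β (σ ^ 2)
          {Y | M ≤ Real.sqrt n *
            enorm2 ((A n).mulVec (mavg α (σ ^ 2) (X n) Y) - (A n).mulVec β)})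
      atTop (𝓝 (0 : ℝ≥0∞)) ∧
    ∀ ε : ℝ, 0 < ε → ∀ c : ℕ → ℝ, (∀ n, 0 ≤ c n) →
      Tendsto (fun n : ℕ => c n / Real.sqrt n) atTop (𝓝 (0 : ℝ)) →
      Tendsto (fun n : ℕ => ⨆ β : (Fin k₁ ⊕ Fin k₂) → ℝ,
          Pmeas (X n) β (σ ^ 2)
            {Y | ε ≤ c n *
              enorm2 ((A n).mulVec (mavg α (σ ^ 2) (X n) Y) - (A n).mulVec β)})
        atTop (𝓝 (0 : ℝ≥0∞)) := by
  obtain ⟨c, hc⟩ := hA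
  have hs : 0 < σ ^ 2 := by positivity
  -- bound for the inverse Gram matrices
  obtain ⟨T, hT0, hT⟩ : ∃ T : ℝ, 0 ≤ T ∧ ∀ n, k₁ + k₂ ≤ n →
      (n : ℝ) * (((X n)ᵀ * X n)⁻¹).trace ≤ T := by
    have hinv : ContinuousAt Inv.inv Q := by
      apply continuousAt_matrix_inv
      rw [show (Ring.inverse : ℝ → ℝ) = Inv.inv from Ring.inverse_eq_inv' ]
      exact continuousAt_inv₀ hQ.det_pos.ne'
    have h1 : Tendsto (fun n : ℕ => (((n : ℝ)⁻¹ • ((X n)ᵀ * X n))⁻¹).trace) atTop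
        (𝓝 (Q⁻¹).trace) :=
      ((continuous_id.matrix_trace).tendsto _).comp (hinv.tendsto.comp hlim)
    obtain ⟨T, hT⟩ := h1.bddAbove_range
    refine ⟨max T 0, le_max_right _ _, fun n hn => le_max_of_le_left ?_⟩
    have h2 := hT (Set.mem_range_self n)
    have hd : IsUnit ((X n)ᵀ * X n).det := (gram_posDef (X n) (hX n hn)).det_pos.ne'.isUnit
    have hn0 : (n : ℝ) ≠ 0 := by
      have : 0 < n := by omega
      positivity
    have h3 : ((n : ℝ)⁻¹ • ((X n)ᵀ * X n))⁻¹ = (n : ℝ) • ((X n)ᵀ * X n)⁻¹ := by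
      apply inv_eq_right_inv
      rw [smul_mul_smul_comm, mul_nonsing_inv _ hd, inv_mul_cancel₀ hn0, one_smul]
    simp only [h3, trace_smul, smul_eq_mul] at h2
    exact h2
  set K : ℝ := max (Fintype.card (Fin k₁ ⊕ Fin k₂) * c) 0 with hKdef
  have hK0 : 0 ≤ K := le_max_right _ _
  have hK : ∀ n, ((A n)ᵀ * A n).trace ≤ K := fun n =>
    (trace_le_lamMax (A n) c (hc n)).trans (le_max_left _ _)
  set B : ℝ := K * T *
        (2 * (σ ^ 2 * (k₁ + k₂)) + 2 * (Real.exp (2 * α * k₂) * (σ ^ 2 / α))) with hB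
  have main : ∀ n, k₁ + k₂ ≤ n → ∀ (β : Fin k₁ ⊕ Fin k₂ → ℝ) (r t : ℝ), 0 < t →
      Pmeas (X n) β (σ ^ 2) {Y | t ≤ r * (Real.sqrt n *
        enorm2 ((A n).mulVec (mavg α (σ ^ 2) (X n) Y) - (A n).mulVec β))} ≤
      ENNReal.ofReal (r ^ 2 * B / t ^ 2) := fun n hn β r t ht =>
    prob_bound (X n) (gram_posDef (X n) (hX n hn)) α (σ ^ 2) hα hs (A n) K T hK0 hT0 (hK n)
      (hT n hn) β r t ht
  constructor
  · have hlimM : Tendsto (fun M : ℝ => ENNReal.ofReal (1 ^ 2 * B / M ^ 2)) atTop (𝓝 0) := by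
      rw [← ENNReal.ofReal_zero]
      exact ENNReal.tendsto_ofReal
        (tendsto_const_nhds.div_atTop (tendsto_pow_atTop two_ne_zero))
    refine tendsto_of_tendsto_of_tendsto_of_le_of_le' tendsto_const_nhds hlimM
      (Eventually.of_forall fun _ => zero_le) ?_
    filter_upwards [eventually_gt_atTop 0] with M hM
    refine iSup_le fun n => iSup_le fun hn => iSup_le fun β => ?_
    simpa only [one_mul] using main n hn β 1 M hM
  · intro ε hε c' hc' hcl
    have hlim2 : Tendsto (fun n : ℕ => ENNReal.ofReal ((c' n / Real.sqrt n) ^ 2 * B / ε ^ 2))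
        atTop (𝓝 0) := by
      rw [← ENNReal.ofReal_zero]
      apply ENNReal.tendsto_ofReal
      simpa using ((hcl.pow 2).mul_const B).div_const (ε ^ 2)
    refine tendsto_of_tendsto_of_tendsto_of_le_of_le' tendsto_const_nhds hlim2
      (Eventually.of_forall fun _ => zero_le) ?_
    filter_upwards [eventually_ge_atTop (k₁ + k₂)] with n hn
    refine iSup_le fun β => ?_
    have hn0 : Real.sqrt n ≠ 0 := by
      have : 0 < n := by omega
      positivity
    have := main n hn β (c' n / Real.sqrt n) ε hε
    simpa only [← mul_assoc, div_mul_cancel₀ _ hn0] using this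

end
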